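/- arXiv:2508.17629 — 3 statements merged into one kernel-verified Lean document; each statement's English description precedes it below -/
import Mathlib

section
/- Let p: E → B and p': E' → B' be (Hurewicz) fibrations with E and E' metric spaces, and suppose there is a pullback square with top map E' → E, left map p', right map p, and bottom map f: B' → B (i.e., p' is the pullback of p along f). Then dsecat(p') ≤ dsecat(p). -/
open MeasureTheory unitInterval Set

universe u v

/-- A (Hurewicz) fibration: a continuous map with the homotopy lifting property
with respect to all topological spaces. -/
def IsHurewiczFibration {E B : Type*} [TopologicalSpace E] [TopologicalSpace B]
    (p : E → B) : Prop :=
  Continuous p ∧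
  ∀ (X : Type u) [TopologicalSpace X] (f : X → E) (H : X × I → B),
    Continuous f → Continuous H → (∀ x, H (x, 0) = p (f x)) →
    ∃ G : X × I → E, Continuous G ∧ (∀ x, G (x, 0) = f x) ∧ ∀ z, H z = p (G z)

/-- `dsecat p`: the distributional sectional category of `p : E → B` (with `E` a metric
space), namely the smallest `n` such that the fibration
`𝔅ₙ₊₁(p) : Eₙ₊₁(p) → B` of probability measures with finite support of size at most `n+1`
contained in single fibers of `p` (with the Lévy–Prokhorov metric topology) admits a
continuous section.  (Value `⊤` if no such `n` exists.) -/
noncomputable def dsecat {E : Type u} {B : Type v} [MetricSpace E] [TopologicalSpace B]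
    (p : E → B) : ℕ∞ :=
  letI : MeasurableSpace E := borel E
  haveI : BorelSpace E := ⟨rfl⟩
  sInf {n : ℕ∞ | ∃ m : ℕ, n = (m : ℕ∞) ∧
    ∃ s : B → LevyProkhorov (ProbabilityMeasure E), Continuous s ∧
      ∀ b : B, ∃ S : Finset E, S.card ≤ m + 1 ∧ (↑S : Set E) ⊆ p ⁻¹' {b} ∧
        (s b).toMeasure (↑S : Set E) = 1}

/-- The classical sectional category (Schwarz genus) of a map: the least `n` such that the
base admits a cover by `n+1` open sets over each of which there is a continuous partial
section. -/
noncomputable def secat {E : Type u} {B : Type v} [TopologicalSpace E] [TopologicalSpace B]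
    (p : E → B) : ℕ∞ :=
  sInf {n : ℕ∞ | ∃ m : ℕ, n = (m : ℕ∞) ∧
    ∃ U : Fin (m + 1) → Set B, (∀ i, IsOpen (U i)) ∧ (⋃ i, U i) = Set.univ ∧
      ∀ i, ∃ s : U i → E, Continuous s ∧ ∀ x : U i, p (s x) = (x : B)}

/-- The point `(i)/(r-1)` of the unit interval, for `i : Fin r`. -/
noncomputable def tDiv (r : ℕ) (i : Fin r) : I :=
  Set.projIcc (0 : ℝ) 1 zero_le_one ((i : ℝ) / (r - 1))

/-- The space `E^I_B` of paths in `E` lying in one single fiber of `p : E → B`. -/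
def FibredPaths {E : Type u} {B : Type v} [TopologicalSpace E] [TopologicalSpace B]
    (p : E → B) : Type u :=
  {γ : C(I, E) // ∃ b : B, ∀ t : I, p (γ t) = b}

/-- The fibred product `E^r_B` of `r` copies of `E` over `B`. -/
def FibredProd {E : Type u} {B : Type v} [TopologicalSpace E] [TopologicalSpace B]
    (p : E → B) (r : ℕ) : Type u :=
  {x : Fin r → E // ∀ i j, p (x i) = p (x j)}

/-- The fibration `Π_r^E : E^I_B → E^r_B`,
`γ ↦ (γ(0), γ(1/(r-1)), …, γ((r-2)/(r-1)), γ(1))`. -/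
noncomputable def parmEval {E : Type u} {B : Type v} [TopologicalSpace E] [TopologicalSpace B]
    (p : E → B) (r : ℕ) : FibredPaths p → FibredProd p r :=
  fun γ => ⟨fun i => γ.1 (tDiv r i), by
    obtain ⟨b, hb⟩ := γ.2
    intro i j
    rw [hb, hb]⟩

noncomputable instance {E : Type u} {B : Type v} [MetricSpace E] [TopologicalSpace B] (p : E → B) :
    MetricSpace (FibredPaths p) :=
  inferInstanceAs (MetricSpace {γ : C(I, E) // ∃ b : B, ∀ t : I, p (γ t) = b})

instance {E : Type u} {B : Type v} [TopologicalSpace E] [TopologicalSpace B] (p : E → B) :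
    TopologicalSpace (FibredPaths p) :=
  inferInstanceAs (TopologicalSpace {γ : C(I, E) // ∃ b : B, ∀ t : I, p (γ t) = b})

instance {E : Type u} {B : Type v} [TopologicalSpace E] [TopologicalSpace B] (p : E → B)
    (r : ℕ) : TopologicalSpace (FibredProd p r) :=
  inferInstanceAs (TopologicalSpace {x : Fin r → E // ∀ i j, p (x i) = p (x j)})

/-- The `r`-th sequential parametrized distributional complexity
`dTC_r[p : E → B] = dsecat (Π_r^E)`. -/
noncomputable def dTCfib {E : Type u} {B : Type v} [MetricSpace E] [TopologicalSpace B]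
    (p : E → B) (r : ℕ) : ℕ∞ :=
  dsecat (parmEval p r)

/-- The `r`-th sequential parametrized topological complexity
`TC_r[p : E → B] = secat (Π_r^E)`. -/
noncomputable def TCfib {E : Type u} {B : Type v} [TopologicalSpace E] [TopologicalSpace B]
    (p : E → B) (r : ℕ) : ℕ∞ :=
  secat (parmEval p r)

/-- The fibration `π_r^X : X^I → X^r`, `φ ↦ (φ(0), φ(1/(r-1)), …, φ(1))`. -/
noncomputable def freeEval (X : Type u) [TopologicalSpace X] (r : ℕ) :
    C(I, X) → (Fin r → X) :=
  fun φ i => φ (tDiv r i)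

/-- The `r`-th sequential distributional complexity `dTC_r(X) = dsecat (π_r^X)`. -/
noncomputable def dTC (X : Type u) [MetricSpace X] (r : ℕ) : ℕ∞ :=
  dsecat (freeEval X r)

/-- The distributional category `dcat(X) = dsecat (P₀(X) → X)` of a pointed space,
where `P₀(X) = {φ : I → X | φ(1) = x₀}` and the fibration is evaluation at `0`. -/
noncomputable def dcat (X : Type u) [MetricSpace X] (x₀ : X) : ℕ∞ :=
  dsecat (fun φ : {φ : C(I, X) // φ 1 = x₀} => φ.1 0)

/-!
Let `s` be a section of `𝔅ₖ(p)`. Over `b : B'` the fibers of `p'` and `p` correspond under `g`, so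
the measure `s (f b)` lifts to a measure `s' b` on the fiber of `p'` over `b` with
`g_* (s' b) = s (f b)`.

For the continuity of `s'` at `b₀`, let `G ⊆ E'` be open and let `K` be the part of the finite
support of `s' b₀` lying in `G`. As `E'` carries the topology induced from `B' × E`, the tube lemma
around `{b₀} × g(K)` gives an open `U ⊇ g(K)` such that `p'⁻¹(b) ∩ g⁻¹(U) ⊆ G` for all `b` near
`b₀`. Hence `s' b₀ G ≤ s (f b₀) U ≤ liminf s (f b) U ≤ liminf s' b G`.
These lower bounds on open sets give Lévy–Prokhorov convergence, although `E'` need not be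
separable: the limit has finite support, so only thickenings of the finitely many subsets of that
support have to be tested.
-/

open Filter Topology

section FiniteSupport

variable {Ω : Type*} [MeasurableSpace Ω]

/-- The set `B_k(F)` of probability measures whose support is finite, of cardinality at most `k`,
and contained in `F`, seen as measures on the ambient space `Ω`. -/
def finSuppProb (k : ℕ) (F : Set Ω) : Set (ProbabilityMeasure Ω) :=
  {μ | ∃ S : Finset Ω, S.card ≤ k ∧ (S : Set Ω) ⊆ F ∧ μ S = 1}

theorem measure_inter_of_eq_one {μ : ProbabilityMeasure Ω} {S : Set Ω} (hS : MeasurableSet S)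
    (hμS : μ S = 1) (A : Set Ω) : (μ : Measure Ω) (A ∩ S) = (μ : Measure Ω) A := by
  refine measure_inter_conull ((prob_compl_eq_zero_iff hS).2 ?_)
  rw [← ProbabilityMeasure.ennreal_coeFn_eq_coeFn_toMeasure, hμS, ENNReal.coe_one]

theorem exists_mem_finSuppProb_map_eq [MeasurableSingletonClass Ω] {Ω' : Type*} [MeasurableSpace Ω']
    [MeasurableSingletonClass Ω'] {g : Ω' → Ω} (hg : Measurable g) {F' : Set Ω'} {F : Set Ω}
    (hF : SurjOn g F' F) {k : ℕ} {μ : ProbabilityMeasure Ω} (hμ : μ ∈ finSuppProb k F) :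
    ∃ ν ∈ finSuppProb k F', (ν : Measure Ω').map g = μ := by
  classical
  obtain ⟨S, hcard, hSF, hμS⟩ := hμ
  choose t htF htg using fun e : S => hF (hSF e.2)
  have ht : Measurable t := measurable_of_finite t
  let ν₀ : Measure Ω' := ((μ : Measure Ω).comap ((↑) : S → Ω)).map t
  have hmap : ν₀.map g = μ := by
    rw [Measure.map_map hg ht, show g ∘ t = (↑) from funext htg]
    refine (map_comap_subtype_coe S.measurableSet _).trans (Measure.ext fun A hA => ?_)
    rw [Measure.restrict_apply hA, measure_inter_of_eq_one S.measurableSet hμS]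
  have hprob : IsProbabilityMeasure ν₀ := by
    rw [← Measure.isProbabilityMeasure_map_iff hg.aemeasurable, hmap]
    infer_instance
  refine ⟨⟨ν₀, hprob⟩, ⟨Finset.univ.image t, ?_, ?_, ?_⟩, hmap⟩
  · exact Finset.card_image_le.trans (by simpa using hcard)
  · simpa [Set.range_subset_iff] using htF
  · have hconull : ν₀ (Finset.univ.image t : Finset Ω') = ν₀ univ := by
      rw [Measure.map_apply ht (Finset.measurableSet _), Measure.map_apply ht MeasurableSet.univ,
        Finset.coe_image, Finset.coe_univ, image_univ, preimage_range, preimage_univ]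
    rw [ProbabilityMeasure.mk_apply, hconull, measure_univ, ENNReal.toNNReal_one]

end FiniteSupport

section Convergence

theorem eventually_le_add_of_le_liminf {ι : Type*} {l : Filter ι} {u : ι → ENNReal} {a δ : ENNReal}
    (ha : a ≠ ⊤) (hδ : δ ≠ 0) (h : a ≤ l.liminf u) : ∀ᶠ i in l, a ≤ u i + δ := by
  rcases eq_or_ne a 0 with rfl | ha₀
  · simp
  filter_upwards [eventually_lt_of_lt_liminf ((ENNReal.sub_lt_self ha ha₀ hδ).trans_le h)] with i hi
  exact tsub_le_iff_right.1 hi.le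

theorem tendsto_levyProkhorov_of_forall_isOpen_le_liminf {Ω ι : Type*} [MetricSpace Ω]
    [MeasurableSpace Ω] [OpensMeasurableSpace Ω] {l : Filter ι} {μs : ι → ProbabilityMeasure Ω}
    {μ : ProbabilityMeasure Ω} {S : Finset Ω} (hμS : μ S = 1)
    (h : ∀ G, IsOpen G → (μ : Measure Ω) G ≤ l.liminf fun i => (μs i : Measure Ω) G) :
    Tendsto (fun i => LevyProkhorov.ofMeasure (μs i)) l (𝓝 (.ofMeasure μ)) := by
  refine Metric.tendsto_nhds.2 fun ε hε => ?_
  have hsubsets : ∀ᶠ i in l, ∀ F ∈ 𝒫 (S : Set Ω), (μ : Measure Ω) F ≤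
      (μs i : Measure Ω) (Metric.thickening (ε / 2) F) + ENNReal.ofReal (ε / 2) :=
    (eventually_all_finite S.finite_toSet.powerset).2 fun F _ =>
      eventually_le_add_of_le_liminf (measure_ne_top _ _) (by simpa using hε)
        ((measure_mono (Metric.self_subset_thickening (half_pos hε) F)).trans
          (h _ Metric.isOpen_thickening))
  filter_upwards [hsubsets] with i hi
  rw [dist_comm, LevyProkhorov.dist_probabilityMeasure_def]
  refine (levyProkhorovDist_le_of_forall_le _ _ (half_pos hε).le fun δ A hδ _ => ?_).trans_lt
    (half_lt_self hε)
  calc (μ : Measure Ω) A = (μ : Measure Ω) (A ∩ S) :=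
        (measure_inter_of_eq_one S.measurableSet hμS A).symm
    _ ≤ (μs i : Measure Ω) (Metric.thickening (ε / 2) (A ∩ S)) + ENNReal.ofReal (ε / 2) :=
        hi _ inter_subset_right
    _ ≤ (μs i : Measure Ω) (Metric.thickening δ A) + ENNReal.ofReal δ := by
        gcongr
        exact (Metric.thickening_mono hδ.le _).trans
          (Metric.thickening_subset_of_subset δ inter_subset_left)

end Convergence

section Pullback

variable {E B E' B' : Type*} [TopologicalSpace B']

theorem exists_isOpen_preimage_subset_of_isInducing [TopologicalSpace E] [TopologicalSpace E']
    {p' : E' → B'} {g : E' → E} (hind : IsInducing fun x => (p' x, g x)) {b₀ : B'} {K G : Set E'}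
    (hK : IsCompact K) (hKb₀ : K ⊆ p' ⁻¹' {b₀}) (hG : IsOpen G) (hKG : K ⊆ G) :
    ∃ U, IsOpen U ∧ K ⊆ g ⁻¹' U ∧ ∀ᶠ b in 𝓝 b₀, p' ⁻¹' {b} ∩ g ⁻¹' U ⊆ G := by
  obtain ⟨W, hW, rfl⟩ := hind.isOpen_iff.1 hG
  have hgK : IsCompact (g '' K) := hK.image (continuous_snd.comp hind.continuous)
  have hsub : {b₀} ×ˢ (g '' K) ⊆ W := by
    rintro ⟨b, e⟩ ⟨rfl, x, hx, rfl⟩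
    have hxW : (p' x, g x) ∈ W := hKG hx
    rwa [show p' x = b from hKb₀ hx] at hxW
  obtain ⟨V, U, hV, hU, hbV, hKU, hVU⟩ := generalized_tube_lemma isCompact_singleton hgK hW hsub
  refine ⟨U, hU, image_subset_iff.1 hKU, ?_⟩
  filter_upwards [hV.mem_nhds (hbV rfl)] with b hb
  rintro x ⟨rfl, hx⟩
  exact hVU ⟨hb, hx⟩

variable [MeasurableSpace E] [MeasurableSpace E']

theorem measure_le_liminf_of_map_eq [TopologicalSpace E] [HasOuterApproxClosed E] [BorelSpace E]
    [TopologicalSpace E'] [T1Space E'] [OpensMeasurableSpace E'] {p' : E' → B'} {g : E' → E}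
    (hind : IsInducing fun x => (p' x, g x)) {k : ℕ} {ν : B' → ProbabilityMeasure E'}
    (hν : ∀ b, ν b ∈ finSuppProb k (p' ⁻¹' {b})) {μ : B' → ProbabilityMeasure E}
    (hmap : ∀ b, (ν b : Measure E').map g = μ b) {b₀ : B'} (hμ : ContinuousAt μ b₀) {G : Set E'}
    (hG : IsOpen G) : (ν b₀ : Measure E') G ≤ (𝓝 b₀).liminf fun b => (ν b : Measure E') G := by
  choose S _ hSp hνS using hν
  have hinter (b : B') (A : Set E') : (ν b : Measure E') (A ∩ S b) = (ν b : Measure E') A :=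
    measure_inter_of_eq_one (S b).measurableSet (hνS b) A
  have hg : Measurable g := (continuous_snd.comp hind.continuous).measurable
  obtain ⟨U, hU, hKU, hUG⟩ := exists_isOpen_preimage_subset_of_isInducing hind
    ((S b₀).finite_toSet.inter_of_right G).isCompact (inter_subset_right.trans (hSp b₀)) hG
    inter_subset_left
  have hmapU (b : B') : (μ b : Measure E) U = (ν b : Measure E') (g ⁻¹' U) := by
    rw [← hmap, Measure.map_apply hg hU.measurableSet]
  calc (ν b₀ : Measure E') G = (ν b₀ : Measure E') (G ∩ S b₀) := (hinter b₀ G).symm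
    _ ≤ (μ b₀ : Measure E) U := (measure_mono hKU).trans (hmapU b₀).ge
    _ ≤ (𝓝 b₀).liminf fun b => (μ b : Measure E) U :=
        ProbabilityMeasure.le_liminf_measure_open_of_tendsto hμ hU
    _ ≤ (𝓝 b₀).liminf fun b => (ν b : Measure E') G := by
        refine liminf_le_liminf (hUG.mono fun b hb => ?_)
        rw [hmapU, ← hinter]
        exact measure_mono fun x hx => hb ⟨hSp b hx.2, hx.1⟩

variable [MetricSpace E] [MetricSpace E']

/-- `s` is a continuous section of the map `𝔅_k(p) : E_k(p) → B` of fiberwise measures with at most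
`k` support points; the space `E_k(p)` enters through its embedding into the measures on `E`. -/
def IsDistributionalSection [OpensMeasurableSpace E] {B : Type*} [TopologicalSpace B] (p : E → B)
    (k : ℕ) (s : B → LevyProkhorov (ProbabilityMeasure E)) : Prop :=
  Continuous s ∧ ∀ b, (s b).toMeasure ∈ finSuppProb k (p ⁻¹' {b})

theorem IsDistributionalSection.exists_pullback [BorelSpace E] [OpensMeasurableSpace E']
    [TopologicalSpace B] {p : E → B} {p' : E' → B'} {f : B' → B} {g : E' → E} (hf : Continuous f)
    (hind : IsInducing fun x => (p' x, g x)) (hsurj : ∀ b, SurjOn g (p' ⁻¹' {b}) (p ⁻¹' {f b}))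
    {k : ℕ} {s : B → LevyProkhorov (ProbabilityMeasure E)} (hs : IsDistributionalSection p k s) :
    ∃ s', IsDistributionalSection p' k s' := by
  have hg : Measurable g := (continuous_snd.comp hind.continuous).measurable
  choose ν hν hmap using fun b => exists_mem_finSuppProb_map_eq hg (hsurj b) (hs.2 (f b))
  have hweak : Continuous fun b => (s (f b)).toMeasure :=
    LevyProkhorov.continuous_toMeasure_probabilityMeasure.comp (hs.1.comp hf)
  refine ⟨fun b => .ofMeasure (ν b), continuous_iff_continuousAt.2 fun b₀ => ?_, hν⟩
  obtain ⟨S, _, _, hνS⟩ := hν b₀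
  exact tendsto_levyProkhorov_of_forall_isOpen_le_liminf hνS fun G hG =>
    measure_le_liminf_of_map_eq hind hν hmap hweak.continuousAt hG

end Pullback

theorem dsecat_pullback_le_general {E B E' B' : Type*} [MetricSpace E] [TopologicalSpace B]
    [MetricSpace E'] [TopologicalSpace B'] (p : E → B) (p' : E' → B')
    (f : B' → B) (g : E' → E) (hf : Continuous f) (hcomm : ∀ x, p (g x) = f (p' x))
    (hpullback : IsHomeomorph
      (fun x : E' => (⟨(p' x, g x), (hcomm x).symm⟩ : {q : B' × E // f q.1 = p q.2}))) :
    dsecat p' ≤ dsecat p := by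
  borelize E E'
  have hind : IsInducing fun x => (p' x, g x) :=
    IsInducing.subtypeVal.comp hpullback.isInducing
  have hsurj (b : B') : SurjOn g (p' ⁻¹' {b}) (p ⁻¹' {f b}) := by
    intro e he
    obtain ⟨x, hx⟩ := hpullback.surjective ⟨(b, e), he.symm⟩
    obtain ⟨hxb, hxe⟩ := Prod.mk.inj (congrArg Subtype.val hx)
    exact ⟨x, hxb, hxe⟩
  refine sInf_le_sInf ?_
  rintro _ ⟨m, rfl, s, hs⟩
  have hs : IsDistributionalSection p (m + 1) s := hs
  exact ⟨m, rfl, hs.exists_pullback hf hind hsurj⟩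

/-- If `p' : E' → B'` is the pullback of a fibration `p : E → B`
(between metric total spaces) along `f : B' → B`, then `dsecat p' ≤ dsecat p`. -/
theorem dsecat_pullback_le {E B E' B' : Type} [MetricSpace E] [TopologicalSpace B]
    [MetricSpace E'] [TopologicalSpace B'] (p : E → B) (p' : E' → B')
    (f : B' → B) (g : E' → E)
    (hp : IsHurewiczFibration p) (hp' : IsHurewiczFibration p')
    (hf : Continuous f) (hg : Continuous g)
    (hcomm : ∀ x, p (g x) = f (p' x))
    (hpullback : IsHomeomorph
      (fun x : E' => (⟨(p' x, g x), (hcomm x).symm⟩ : {q : B' × E // f q.1 = p q.2}))) :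
    dsecat p' ≤ dsecat p :=
  dsecat_pullback_le_general p p' f g hf hcomm hpullback
end

section
/- Let p: E → B be a fibration with E a metric space, let B' ⊆ B, let E' = p^{-1}(B'), and let p': E' → B' be the restricted fibration. Then for every integer r ≥ 2, dTC_r[p': E' → B'] ≤ dTC_r[p: E → B]. In particular, taking B' = {b} a single point with fiber F = p^{-1}(b), one has dTC_r(F) ≤ dTC_r[p: E → B]. -/
open MeasureTheory unitInterval Set

universe u v

/-!
If `j : E' → E` is an isometric embedding, then so is the pushforward of probability measures along
`j` for the Lévy–Prokhorov distance. A section `s` of `𝔅ₖ(p)` can therefore be pulled back along a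
map of base spaces `f : B' → B` as soon as every fiber of `p` over a point `f b` is covered by the
image under `j` of the fiber of `p'` over `b`: the measures `s (f b)` lift through `j`, and any
choice of lifts is automatically continuous.

A path contained in a single fiber of `p` and meeting `p⁻¹(B')` stays in `p⁻¹(B')`. This gives the
covering condition for the evaluation maps of a restriction of `p`. The space of all paths in a
fiber is the fibred path space of the restriction of `p` to a point.
-/

theorem preimage_thickening_image {X Y : Type*} [PseudoEMetricSpace X] [PseudoEMetricSpace Y]
    {j : X → Y} (hj : Isometry j) (δ : ℝ) (s : Set X) :
    j ⁻¹' Metric.thickening δ (j '' s) = Metric.thickening δ s := by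
  ext x
  simp only [mem_preimage, Metric.mem_thickening_iff_infEDist_lt, Metric.infEDist_image hj]

section LevyProkhorov

variable {X Y : Type*} [PseudoEMetricSpace X] [MeasurableSpace X] [OpensMeasurableSpace X]
  [PseudoEMetricSpace Y] [MeasurableSpace Y] [BorelSpace Y] {j : X → Y}

theorem forall_map_le_map_thickening_add_iff (hj : Isometry j) (μ ν : Measure X) (ε : ENNReal) :
    (∀ s, MeasurableSet s → μ.map j s ≤ ν.map j (Metric.thickening ε.toReal s) + ε) ↔
      ∀ s, MeasurableSet s → μ s ≤ ν (Metric.thickening ε.toReal s) + ε := by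
  have hjm : Measurable j := hj.continuous.measurable
  have map_thickening (s : Set Y) : ν.map j (Metric.thickening ε.toReal s) =
      ν (j ⁻¹' Metric.thickening ε.toReal s) :=
    Measure.map_apply hjm Metric.isOpen_thickening.measurableSet
  refine ⟨fun h s _ ↦ ?_, fun h s hs ↦ ?_⟩
  · -- The image `j '' s` need not be measurable, but its closure is, and has the same thickening.
    have subset_preimage : s ⊆ j ⁻¹' closure (j '' s) := image_subset_iff.mp subset_closure
    calc
      μ s ≤ μ.map j (closure (j '' s)) :=
        (measure_mono subset_preimage).trans (Measure.le_map_apply hjm.aemeasurable _)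
      _ ≤ ν.map j (Metric.thickening ε.toReal (closure (j '' s))) + ε :=
        h _ isClosed_closure.measurableSet
      _ = ν (Metric.thickening ε.toReal s) + ε := by
        rw [Metric.thickening_closure, map_thickening, preimage_thickening_image hj]
  · have thickening_subset :
        Metric.thickening ε.toReal (j ⁻¹' s) ⊆ j ⁻¹' Metric.thickening ε.toReal s := by
      rw [← preimage_thickening_image hj]
      exact preimage_mono (Metric.thickening_subset_of_subset _ (image_preimage_subset j s))
    calc
      μ.map j s = μ (j ⁻¹' s) := Measure.map_apply hjm hs
      _ ≤ ν (Metric.thickening ε.toReal (j ⁻¹' s)) + ε := h _ (hjm hs)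
      _ ≤ ν (j ⁻¹' Metric.thickening ε.toReal s) + ε := by gcongr
      _ = ν.map j (Metric.thickening ε.toReal s) + ε := by rw [map_thickening]

theorem levyProkhorovEDist_map_isometry (hj : Isometry j) (μ ν : Measure X) :
    levyProkhorovEDist (μ.map j) (ν.map j) = levyProkhorovEDist μ ν := by
  simp only [levyProkhorovEDist, imp_and, forall_and,
    forall_map_le_map_thickening_add_iff hj]

theorem isometry_levyProkhorov_map (hj : Isometry j) :
    Isometry fun μ : LevyProkhorov (ProbabilityMeasure X) ↦
      LevyProkhorov.ofMeasure (μ.toMeasure.map hj.continuous.aemeasurable) :=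
  fun μ ν ↦ levyProkhorovEDist_map_isometry hj μ.toMeasure ν.toMeasure

end LevyProkhorov

section FinitelySupported

variable {X Y : Type*} [MeasurableSpace X]

/-- The probability measures carried by a set of at most `k` points of `A`, as a set of measures on
the ambient space: the paper's `B_k(A)` for a subset `A` of `X`. -/
def finitelySupportedOn (k : ℕ) (A : Set X) : Set (ProbabilityMeasure X) :=
  {μ | ∃ S : Finset X, S.card ≤ k ∧ ↑S ⊆ A ∧ μ S = 1}

variable [MeasurableSpace Y] [MeasurableSingletonClass Y]

theorem exists_measurable_rightInvOn_of_countable [Nonempty X] {j : X → Y} {A : Set X} {S : Set Y}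
    (hS : S.Countable) (hAS : SurjOn j A S) :
    ∃ g : Y → X, Measurable g ∧ MapsTo g S A ∧ RightInvOn g j S := by
  classical
  obtain ⟨x₀⟩ := ‹Nonempty X›
  let g : Y → X := S.piecewise (Function.invFunOn j A) fun _ ↦ x₀
  have hg : EqOn (Function.invFunOn j A) g S := (piecewise_eqOn S _ _).symm
  refine ⟨g, ?_, hAS.mapsTo_invFunOn.congr hg, hAS.rightInvOn_invFunOn.congr_left hg⟩
  refine (measurable_const (a := x₀)).measurable_of_countable_ne (hS.mono fun y hy ↦ ?_)
  by_contra hyS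
  exact hy (piecewise_eq_of_notMem S _ (fun _ ↦ x₀) hyS).symm

theorem surjOn_map_finitelySupportedOn {j : X → Y} (hj : Measurable j) {A : Set X} {C : Set Y}
    (hAC : SurjOn j A C) (k : ℕ) :
    SurjOn (fun μ : ProbabilityMeasure X ↦ μ.map hj.aemeasurable)
      (finitelySupportedOn k A) (finitelySupportedOn k C) := by
  classical
  rintro μ ⟨S, hcard, hSC, hμS⟩
  have hS : ∀ᵐ y ∂(μ : Measure Y), y ∈ S := by
    refine (mem_ae_iff_prob_eq_one S.measurableSet).mpr ?_
    rw [← μ.ennreal_coeFn_eq_coeFn_toMeasure, hμS, ENNReal.coe_one]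
  obtain ⟨y, hy⟩ := hS.exists
  have : Nonempty X := ⟨(hAC (hSC hy)).choose⟩
  obtain ⟨g, hg, hgA, hjg⟩ :=
    exists_measurable_rightInvOn_of_countable S.countable_toSet (hAC.mono Subset.rfl hSC)
  refine ⟨μ.map hg.aemeasurable, ⟨S.image g, Finset.card_image_le.trans hcard, ?_, ?_⟩, ?_⟩
  · rw [Finset.coe_image]
    exact hgA.image_subset
  · have le_map : (μ : Measure Y) S ≤ (μ : Measure Y).map g (S.image g : Set X) := by
      refine (measure_mono fun y hy ↦ ?_).trans (Measure.le_map_apply hg.aemeasurable _)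
      exact Finset.mem_image_of_mem g hy
    refine le_antisymm (ProbabilityMeasure.apply_le_one _ _) (hμS.symm.trans_le ?_)
    exact ENNReal.toNNReal_mono (measure_ne_top _ _) le_map
  · refine Subtype.ext ?_
    calc
      ((μ : Measure Y).map g).map j = (μ : Measure Y).map (j ∘ g) := Measure.map_map hj hg
      _ = (μ : Measure Y).map id := Measure.map_congr (hS.mono fun y hy ↦ hjg hy)
      _ = μ := Measure.map_id

end FinitelySupported

theorem dsecat_le_of_surjOn_fiber {E' E B' B : Type*}
    [MetricSpace E'] [MetricSpace E] [TopologicalSpace B'] [TopologicalSpace B]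
    {p' : E' → B'} {p : E → B} {j : E' → E} {f : B' → B} (hj : Isometry j) (hf : Continuous f)
    (hfiber : ∀ b, SurjOn j (p' ⁻¹' {b}) (p ⁻¹' {f b})) :
    dsecat p' ≤ dsecat p := by
  let : MeasurableSpace E' := borel E'
  let : MeasurableSpace E := borel E
  have : BorelSpace E' := ⟨rfl⟩
  have : BorelSpace E := ⟨rfl⟩
  refine sInf_le_sInf ?_
  rintro _ ⟨m, rfl, s, hs, hsupp⟩
  choose s' hs'supp hs'map using fun b ↦
    surjOn_map_finitelySupportedOn hj.continuous.measurable (hfiber b) (m + 1) (hsupp (f b))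
  refine ⟨m, rfl, fun b ↦ LevyProkhorov.ofMeasure (s' b), ?_, hs'supp⟩
  rw [← (isometry_levyProkhorov_map hj).comp_continuous_iff]
  exact (hs.comp hf).congr fun b ↦ congrArg LevyProkhorov.ofMeasure (hs'map b).symm

theorem isometry_continuousMap_comp {K X Y : Type*} [TopologicalSpace K] [CompactSpace K]
    [PseudoMetricSpace X] [PseudoMetricSpace Y] {j : C(X, Y)} (hj : Isometry j) :
    Isometry (j.comp : C(K, X) → C(K, Y)) := by
  intro γ δ
  simp only [ContinuousMap.edist_eq_iSup, ContinuousMap.comp_apply, hj.edist_eq]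

section Pullback

variable {E' E B' B : Type*} [TopologicalSpace B'] [TopologicalSpace B]
  {p' : E' → B'} {p : E → B} {g : B' → B}

namespace FibredPaths

/-- Postcomposition `γ ↦ j ∘ γ` on fibred path spaces, for a map `j` of total spaces over a map `g`
of base spaces. -/
def map [TopologicalSpace E'] [TopologicalSpace E] (j : C(E', E))
    (hcomm : ∀ x, p (j x) = g (p' x)) (γ : FibredPaths p') : FibredPaths p :=
  ⟨j.comp γ.1, γ.2.imp' g fun b hb t ↦ by rw [← hb t]; exact hcomm _⟩

theorem isometry_map [MetricSpace E'] [MetricSpace E] {j : C(E', E)} (hj : Isometry j)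
    (hcomm : ∀ x, p (j x) = g (p' x)) :
    Isometry (map j hcomm) :=
  fun γ δ ↦ isometry_continuousMap_comp hj γ.1 δ.1

theorem mem_range_map [TopologicalSpace E'] [TopologicalSpace E] {j : C(E', E)}
    (hj : Topology.IsInducing j) (hcomm : ∀ x, p (j x) = g (p' x)) (hg : Function.Injective g)
    (hrange : p ⁻¹' range g ⊆ range j) {γ : FibredPaths p} {t : I} (ht : p (γ.1 t) ∈ range g) :
    γ ∈ range (map j hcomm) := by
  obtain ⟨γ, b, hb⟩ := γ
  obtain ⟨b', hb'⟩ : b ∈ range g := hb t ▸ ht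
  choose γ' hγ' using fun t ↦ hrange (show p (γ t) ∈ range g from ⟨b', hb'.trans (hb t).symm⟩)
  have hcont : Continuous γ' := hj.continuous_iff.mpr <| by
    simpa only [Function.comp_def, hγ'] using γ.continuous
  refine ⟨⟨⟨γ', hcont⟩, b', fun t ↦ hg ?_⟩, Subtype.ext <| ContinuousMap.ext hγ'⟩
  calc
    g (p' (γ' t)) = p (γ t) := by rw [← hcomm, hγ']
    _ = g b' := (hb t).trans hb'.symm

end FibredPaths

namespace FibredProd

variable [TopologicalSpace E'] [TopologicalSpace E] {j : C(E', E)} {r : ℕ}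

/-- The map `(x₁, …, xᵣ) ↦ (j x₁, …, j xᵣ)` of fibred products, for a map `j` of total spaces over a
map `g` of base spaces. -/
def map (j : C(E', E)) (hcomm : ∀ x, p (j x) = g (p' x)) (x : FibredProd p' r) :
    FibredProd p r :=
  ⟨j ∘ x.1, fun i k ↦ by simp only [Function.comp_apply, hcomm, x.2 i k]⟩

theorem continuous_map (hcomm : ∀ x, p (j x) = g (p' x)) :
    Continuous (map j hcomm : FibredProd p' r → FibredProd p r) :=
  Continuous.subtype_mk (continuous_pi fun i ↦
    j.continuous.comp ((continuous_apply i).comp continuous_subtype_val)) _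

theorem map_injective (hj : Function.Injective j) (hcomm : ∀ x, p (j x) = g (p' x)) :
    Function.Injective (map j hcomm : FibredProd p' r → FibredProd p r) :=
  fun _ _ h ↦ Subtype.ext <| hj.comp_left <| congrArg Subtype.val h

end FibredProd

theorem surjOn_map_fiber_parmEval [TopologicalSpace E'] [TopologicalSpace E] {j : C(E', E)}
    (hj : Topology.IsEmbedding j) (hcomm : ∀ x, p (j x) = g (p' x)) (hg : Function.Injective g)
    (hrange : p ⁻¹' range g ⊆ range j) {r : ℕ} (hr : r ≠ 0) (x : FibredProd p' r) :
    SurjOn (FibredPaths.map j hcomm) (parmEval p' r ⁻¹' {x})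
      (parmEval p r ⁻¹' {FibredProd.map j hcomm x}) := by
  intro γ (hγ : parmEval p r γ = FibredProd.map j hcomm x)
  let i : Fin r := ⟨0, Nat.pos_of_ne_zero hr⟩
  have hγi : γ.1 (tDiv r i) = j (x.1 i) := congrFun (congrArg Subtype.val hγ) i
  obtain ⟨γ', rfl⟩ := FibredPaths.mem_range_map hj.isInducing hcomm hg hrange
    (show p (γ.1 (tDiv r i)) ∈ range g from ⟨p' (x.1 i), by rw [hγi, hcomm]⟩)
  exact ⟨γ', FibredProd.map_injective hj.injective hcomm hγ, rfl⟩

theorem dTCfib_le_of_isometry [MetricSpace E'] [MetricSpace E] {j : E' → E} (hj : Isometry j)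
    (hcomm : ∀ x, p (j x) = g (p' x)) (hg : Function.Injective g)
    (hrange : p ⁻¹' range g ⊆ range j) {r : ℕ} (hr : r ≠ 0) :
    dTCfib p' r ≤ dTCfib p r :=
  let j' : C(E', E) := ⟨j, hj.continuous⟩
  dsecat_le_of_surjOn_fiber (FibredPaths.isometry_map (j := j') hj hcomm)
    (FibredProd.continuous_map hcomm)
    (surjOn_map_fiber_parmEval (j := j') hj.isEmbedding hcomm hg hrange hr)

end Pullback

theorem dTC_le_dTCfib_of_subsingleton {X : Type u} {B : Type v} [MetricSpace X]
    [TopologicalSpace B] [Subsingleton B] (p : X → B) (r : ℕ) :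
    dTC X r ≤ dTCfib p r := by
  let toFibred : C(I, X) → FibredPaths p := fun γ ↦ ⟨γ, p (γ 0), fun _ ↦ Subsingleton.elim _ _⟩
  have isometry_toFibred : Isometry toFibred := fun _ _ ↦ rfl
  refine dsecat_le_of_surjOn_fiber isometry_toFibred
    (f := fun x ↦ ⟨x, fun _ _ ↦ Subsingleton.elim _ _⟩) (continuous_id.subtype_mk _) ?_
  exact fun x γ hγ ↦ ⟨γ.1, congrArg Subtype.val hγ, rfl⟩

theorem dTCfib_restrictPreimage_le {E : Type u} {B : Type v} [MetricSpace E] [TopologicalSpace B]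
    (p : E → B) (B' : Set B) {r : ℕ} (hr : r ≠ 0) :
    dTCfib (B'.restrictPreimage p) r ≤ dTCfib p r := by
  refine dTCfib_le_of_isometry (j := ((↑) : p ⁻¹' B' → E)) (g := ((↑) : B' → B))
    isometry_subtype_coe (fun _ ↦ rfl) Subtype.val_injective ?_ hr
  rw [Subtype.range_coe, Subtype.range_coe]

theorem dTCfib_restrict_le_general {E : Type u} {B : Type v} [MetricSpace E] [TopologicalSpace B]
    (p : E → B) (B' : Set B) {r : ℕ} (hr : r ≠ 0) :
    dTCfib (fun x : (p ⁻¹' B') => (⟨p x.1, x.2⟩ : B')) r ≤ dTCfib p r ∧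
    ∀ b : B, dTC (p ⁻¹' {b} : Set E) r ≤ dTCfib p r :=
  ⟨dTCfib_restrictPreimage_le p B' hr, fun b ↦
    (dTC_le_dTCfib_of_subsingleton (restrictPreimage {b} p) r).trans
      (dTCfib_restrictPreimage_le p {b} hr)⟩

/-- For a fibration `p : E → B` with metric total space, a subset
`B' ⊆ B` with `E' = p⁻¹(B')`, and the restricted fibration `p' : E' → B'`, one has
`dTC_r[p' : E' → B'] ≤ dTC_r[p : E → B]` for every `r ≥ 2`; in particular, for the
fiber `F = p⁻¹(b)` over any point `b ∈ B`, `dTC_r(F) ≤ dTC_r[p : E → B]`. -/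
theorem dTCfib_restrict_le {E B : Type} [MetricSpace E] [TopologicalSpace B]
    (p : E → B) (hp : IsHurewiczFibration p) (B' : Set B) (r : ℕ) (hr : 2 ≤ r) :
    dTCfib (fun x : (p ⁻¹' B') => (⟨p x.1, x.2⟩ : B')) r ≤ dTCfib p r ∧
    ∀ b : B, dTC (p ⁻¹' {b} : Set E) r ≤ dTCfib p r :=
  dTCfib_restrict_le_general p B' (by lia)
end

section
/- Let p: E → B be a fibration with E a metric space, let r ≥ 2 and n ≥ 1 be integers, and let δ_{n!}: E^r_B → SP^{n!}(E^r_B) be the diagonal embedding and Δ_r: E → E^r_B the diagonal map. If dTC_r[p: E → B] < n, then there exist subsets A_1, A_2, …, A_n of E^r_B covering E^r_B such that each A_i deforms, inside SP^{n!}(E^r_B), to the diagonal Δ_r(E) ⊆ E^r_B ⊆ SP^{n!}(E^r_B); that is, for each i there is a homotopy H_i: A_i × [0,1] → SP^{n!}(E^r_B) with H_i(a, 0) = δ_{n!}(a) and H_i(a, 1) ∈ δ_{n!}(Δ_r(E)) for all a ∈ A_i. -/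
open MeasureTheory unitInterval Set

universe u v

/-- Tuples up to permutation: the defining setoid of the symmetric product. -/
def spSetoid (X : Type*) (k : ℕ) : Setoid (Fin k → X) where
  r x y := ∃ sg : Equiv.Perm (Fin k), x ∘ sg = y
  iseqv := by
    refine ⟨fun x => ⟨Equiv.refl _, rfl⟩, ?_, ?_⟩
    · rintro x y ⟨sg, rfl⟩
      exact ⟨sg.symm, by funext i; simp⟩
    · rintro x y z ⟨sg, rfl⟩ ⟨tu, rfl⟩
      exact ⟨tu.trans sg, rfl⟩

/-- The `k`-fold symmetric product `SP^k(X) = X^k / Σ_k`, with the quotient topology. -/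
def SymProd (X : Type*) (k : ℕ) : Type _ := Quotient (spSetoid X k)

instance (X : Type*) [TopologicalSpace X] (k : ℕ) : TopologicalSpace (SymProd X k) :=
  inferInstanceAs (TopologicalSpace (Quotient (spSetoid X k)))

/-- The diagonal embedding `X → SP^k(X)`. -/
def spDiag {X : Type*} (k : ℕ) (x : X) : SymProd X k :=
  Quotient.mk (spSetoid X k) (fun _ => x)

/-- The diagonal map `Δ_r : E → E^r_B`. -/
def fibDiag {E B : Type} [TopologicalSpace E] [TopologicalSpace B] (p : E → B) (r : ℕ) :
    E → FibredProd p r :=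
  fun e => ⟨fun _ => e, fun _ _ => rfl⟩

/-!
Since `dTC_r[p] < n`, there is a continuous family of probability measures on `E^I_B`, the measure
over `x ∈ E^r_B` being carried by at most `n` paths `γ` with `Π_r(γ) = x`. By the portmanteau
theorem the support of such a measure is a lower hemicontinuous function of `x`: a support point
cannot disappear, although it can split into several. Where the number of support points is
constant, splitting is excluded as well, so on the set `A_i` of those `x` whose support has `i`
points, the support is a continuous function with values in `SP^i(E^I_B)`. Repeating each of the
`i` points `n! / i` times makes it take values in `SP^{n!}(E^I_B)`, and contracting all the paths
to their common starting point gives the homotopy.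
-/

open Topology Filter

theorem lowerHemicontinuous_univ_pi {X ι : Type*} [Finite ι] {Y : ι → Type*} [TopologicalSpace X]
    [∀ i, TopologicalSpace (Y i)] {S : ∀ i, X → Set (Y i)} (hS : ∀ i, LowerHemicontinuous (S i)) :
    LowerHemicontinuous fun x => univ.pi fun i => S i x := by
  refine fun x => lowerHemicontinuousAt_iff.2 fun W hW ⟨y, hyS, hyW⟩ => ?_
  obtain ⟨U, hU, hUW⟩ := isOpen_pi_iff'.1 hW y hyW
  have nearby_point (i : ι) : ∀ᶠ x' in 𝓝 x, (S i x' ∩ U i).Nonempty :=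
    lowerHemicontinuousAt_iff.1 (hS i x) _ (hU i).1 ⟨y i, hyS i (mem_univ i), (hU i).2⟩
  filter_upwards [eventually_all.2 nearby_point] with x' hx'
  choose z hz using hx'
  exact ⟨z, fun i _ => (hz i).1, hUW fun i _ => (hz i).2⟩

theorem isOpen_setOfPred_injective {ι Y : Type*} [Finite ι] [TopologicalSpace Y] [T2Space Y] :
    IsOpen {y : ι → Y | Function.Injective y} := by
  simp only [Function.Injective, ← not_imp_not (a := _ = _), ofPred_forall]
  refine isOpen_iInter_of_finite fun i => isOpen_iInter_of_finite fun j =>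
    isOpen_iInter_of_finite fun _ => isOpen_ne_fun (continuous_apply i) (continuous_apply j)

namespace SymProd

variable {X Y T : Type*} {k : ℕ}

/-- The unordered `k`-tuple `[x₀, …, xₖ₋₁] ∈ SP^k(X)` underlying an ordered one. -/
def mk (x : Fin k → X) : SymProd X k :=
  Quotient.mk (spSetoid X k) x

theorem mk_surjective : Function.Surjective (mk : (Fin k → X) → SymProd X k) :=
  Quotient.mk_surjective

theorem mk_eq_mk {x y : Fin k → X} : mk x = mk y ↔ ∃ g : Equiv.Perm (Fin k), x ∘ g = y :=
  Quotient.eq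

theorem isOpenQuotientMap_mk [TopologicalSpace X] :
    IsOpenQuotientMap (mk : (Fin k → X) → SymProd X k) where
  surjective := mk_surjective
  continuous := continuous_quotient_mk'
  isOpenMap U hU := by
    have saturation : mk ⁻¹' (mk '' U) = ⋃ g : Equiv.Perm (Fin k), (· ∘ g) ⁻¹' U := by
      ext x
      simp only [mem_preimage, mem_image, eq_comm (b := mk x), mk_eq_mk, mem_iUnion]
      exact ⟨fun ⟨_, hyU, g, hg⟩ => ⟨g, hg ▸ hyU⟩, fun ⟨g, hg⟩ => ⟨_, hg, g, rfl⟩⟩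
    have isOpen_saturation : IsOpen (mk ⁻¹' (mk '' U)) :=
      saturation ▸ isOpen_iUnion fun g => hU.preimage (by fun_prop)
    exact isOpen_saturation

/-- The map `SP^k(X) → SP^k(Y)` induced by `f : X → Y`. -/
def map (f : X → Y) : SymProd X k → SymProd Y k :=
  Quotient.map' (f ∘ ·) fun _ _ ⟨g, hg⟩ => ⟨g, congrArg (f ∘ ·) hg⟩

theorem map_mk_eq_spDiag {f : X → Y} {x : Fin k → X} {y : Y} (h : ∀ j, f (x j) = y) :
    map f (mk x) = spDiag k y :=
  congrArg mk (funext h)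

/-- `mk` is an open map, so `mk × id` is still a quotient map and continuity can be tested on
ordered tuples. -/
theorem continuous_map_prod [TopologicalSpace X] [TopologicalSpace Y] [TopologicalSpace T]
    {F : X × T → Y} (hF : Continuous F) :
    Continuous fun w : SymProd X k × T => map (fun x => F (x, w.2)) w.1 := by
  rw [← (isOpenQuotientMap_mk.prodMap IsOpenQuotientMap.id).continuous_comp_iff]
  have hF_tuple : Continuous fun w : (Fin k → X) × T => fun j => F (w.1 j, w.2) := by fun_prop
  exact isOpenQuotientMap_mk.continuous.comp hF_tuple

/-- The map `SP^k(X) → SP^{kq}(X)` repeating each entry `q` times. -/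
def replicate (q : ℕ) : SymProd X k → SymProd X (k * q) :=
  Quotient.map' (fun x j => x (finProdFinEquiv.symm j).1) fun _ _ ⟨g, hg⟩ =>
    ⟨finProdFinEquiv.permCongr (g.prodCongr (Equiv.refl _)), by
      subst hg
      funext j
      simp [-finProdFinEquiv_symm_apply]⟩

theorem replicate_mk (q : ℕ) (x : Fin k → X) :
    replicate q (mk x) = mk fun j => x (finProdFinEquiv.symm j).1 :=
  rfl

theorem continuous_replicate [TopologicalSpace X] (q : ℕ) :
    Continuous (replicate q : SymProd X k → SymProd X (k * q)) := by
  rw [← isOpenQuotientMap_mk.continuous_comp_iff]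
  have continuous_reindex :
      Continuous fun (x : Fin k → X) (j : Fin (k * q)) => x (finProdFinEquiv.symm j).1 := by
    fun_prop
  exact isOpenQuotientMap_mk.continuous.comp continuous_reindex

/-- A set of `k` points of `X`, regarded as a point of `SP^k(X)`. -/
noncomputable def ofFinset {S : Finset X} (hS : S.card = k) : SymProd X k :=
  mk fun j => (S.equivFinOfCardEq hS).symm j

theorem exists_mk_eq_ofFinset {S : Finset X} (hS : S.card = k) :
    ∃ x : Fin k → X, Function.Injective x ∧ (∀ j, x j ∈ S) ∧ mk x = ofFinset hS :=
  ⟨_, Subtype.val_injective.comp (Equiv.injective _), fun _ => Subtype.property _, rfl⟩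

theorem mk_eq_ofFinset {S : Finset X} (hS : S.card = k) {x : Fin k → X}
    (hx : Function.Injective x) (hxS : ∀ j, x j ∈ S) : mk x = ofFinset hS := by
  let e := S.equivFinOfCardEq hS
  let enum : Fin k → Fin k := fun j => e ⟨x j, hxS j⟩
  have enum_injective : Function.Injective enum := fun i j hij =>
    hx (congrArg Subtype.val (e.injective hij))
  refine (mk_eq_mk.2 ⟨Equiv.ofBijective enum (Finite.injective_iff_bijective.1 enum_injective),
    funext fun j => ?_⟩).symm
  simp [enum, e]

theorem continuous_ofFinset [TopologicalSpace X] [TopologicalSpace Y] [T2Space Y]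
    {S : X → Finset Y} (hS : LowerHemicontinuous fun a => (S a : Set Y))
    (hcard : ∀ a, (S a).card = k) : Continuous fun a => ofFinset (hcard a) := by
  refine continuous_iff_continuousAt.2 fun a W hW => ?_
  obtain ⟨y, hy, hyS, hy_mk⟩ := exists_mk_eq_ofFinset (hcard a)
  rw [← hy_mk] at hW
  obtain ⟨V, hVW, hV, hyV⟩ := mem_nhds_iff.1 (isOpenQuotientMap_mk.continuous.continuousAt hW)
  have nearby_tuple : ∀ᶠ b in 𝓝 a,
      ((univ.pi fun _ => (S b : Set Y)) ∩ (V ∩ {z | Function.Injective z})).Nonempty :=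
    lowerHemicontinuousAt_iff.1 (lowerHemicontinuous_univ_pi (fun _ : Fin k => hS) a) _
      (hV.inter isOpen_setOfPred_injective) ⟨y, fun j _ => hyS j, hyV, hy⟩
  rw [mem_map]
  filter_upwards [nearby_tuple] with b ⟨z, hzS, hzV, hz⟩
  rw [mem_preimage, ← mk_eq_ofFinset (hcard b) hz fun j => hzS j (mem_univ j)]
  exact hVW hzV

end SymProd

section FinitelySupportedMeasures

variable {X : Type u} {Y : Type v} [TopologicalSpace X]

theorem support_mem_ae_of_finite [TopologicalSpace Y] [MeasurableSpace Y] {μ : Measure Y}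
    {S : Set Y} (hS : S.Finite) (hSμ : S ∈ ae μ) : μ.support ∈ ae μ := by
  have measure_diff : μ (S \ μ.support) = 0 :=
    Measure.measure_eq_zero_of_isCompact_subset_compl_support hS.sdiff.isCompact
      (sdiff_subset_compl _ _)
  filter_upwards [hSμ, compl_mem_ae_iff.2 measure_diff] with y hyS hy
  exact not_not.1 fun hy_support => hy ⟨hyS, hy_support⟩

theorem lowerHemicontinuous_support [TopologicalSpace Y] [MeasurableSpace Y]
    [OpensMeasurableSpace Y] [HasOuterApproxClosed Y] {μ : X → ProbabilityMeasure Y}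
    (hμ : Continuous μ) (hsupp : ∀ x, (μ x : Measure Y).support ∈ ae (μ x : Measure Y)) :
    LowerHemicontinuous fun x => (μ x : Measure Y).support := by
  refine fun x => lowerHemicontinuousAt_iff.2 fun U hU ⟨y, hy, hyU⟩ => ?_
  have measure_pos : 0 < (μ x : Measure Y) U :=
    (Measure.mem_support_iff_forall y).1 hy U (hU.mem_nhds hyU)
  have eventually_pos : ∀ᶠ x' in 𝓝 x, 0 < (μ x' : Measure Y) U :=
    eventually_lt_of_lt_liminf <| measure_pos.trans_le <|
      ProbabilityMeasure.le_liminf_measure_open_of_tendsto hμ.continuousAt hU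
  filter_upwards [eventually_pos] with x' hx'
  rw [inter_comm]
  exact nonempty_of_measure_ne_zero (by
    rw [measure_inter_conull (hsupp x')]
    exact hx'.ne')

theorem exists_finset_lowerHemicontinuous [TopologicalSpace Y] [T1Space Y] [MeasurableSpace Y]
    [OpensMeasurableSpace Y] [HasOuterApproxClosed Y] {μ : X → ProbabilityMeasure Y}
    (hμ : Continuous μ) {S : X → Finset Y} (hS : ∀ x, (S x : Set Y) ∈ ae (μ x : Measure Y)) :
    ∃ T : X → Finset Y, LowerHemicontinuous (fun x => (T x : Set Y)) ∧
      ∀ x, (T x).Nonempty ∧ T x ⊆ S x := by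
  have support_subset (x : X) : (μ x : Measure Y).support ⊆ S x :=
    Measure.support_subset_of_isClosed (S x).finite_toSet.isClosed (hS x)
  have support_mem_ae (x : X) : (μ x : Measure Y).support ∈ ae (μ x : Measure Y) :=
    support_mem_ae_of_finite (S x).finite_toSet (hS x)
  have support_finite (x : X) : (μ x : Measure Y).support.Finite :=
    (S x).finite_toSet.subset (support_subset x)
  refine ⟨fun x => (support_finite x).toFinset, ?_, fun x =>
    ⟨(support_finite x).toFinset_nonempty.2 (nonempty_of_mem (support_mem_ae x)),
      Finite.toFinset_subset.2 (support_subset x)⟩⟩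
  simpa only [Finite.coe_toFinset] using lowerHemicontinuous_support hμ support_mem_ae

theorem exists_finset_lowerHemicontinuous_of_dsecat_lt [MetricSpace Y] {q : Y → X} {n : ℕ}
    (hq : dsecat q < n) :
    ∃ T : X → Finset Y, LowerHemicontinuous (fun x => (T x : Set Y)) ∧
      ∀ x, (T x).Nonempty ∧ (T x).card ≤ n ∧ ∀ y ∈ T x, q y = x := by
  let : MeasurableSpace Y := borel Y
  have : BorelSpace Y := ⟨rfl⟩
  obtain ⟨_, ⟨m, rfl, s, hs, hsS⟩, hmn⟩ := sInf_lt_iff.1 hq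
  choose S hS_card hS_fiber hS_mass using hsS
  let μ (x : X) : ProbabilityMeasure Y := (s x).toMeasure
  have hμ : Continuous μ := LevyProkhorov.continuous_toMeasure_probabilityMeasure.comp hs
  have hSμ (x : X) : (S x : Set Y) ∈ ae (μ x : Measure Y) := by
    rw [mem_ae_iff_prob_eq_one (S x).measurableSet,
      ← ProbabilityMeasure.ennreal_coeFn_eq_coeFn_toMeasure]
    exact congrArg _ (hS_mass x)
  obtain ⟨T, hT, hT_spec⟩ := exists_finset_lowerHemicontinuous hμ hSμ
  refine ⟨T, hT, fun x => ⟨(hT_spec x).1, ?_, fun y hy => hS_fiber x ((hT_spec x).2 hy)⟩⟩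
  calc (T x).card
    _ ≤ (S x).card := Finset.card_le_card (hT_spec x).2
    _ ≤ m + 1 := hS_card x
    _ ≤ n := Nat.cast_lt.1 hmn

theorem exists_cover_multisection_of_dsecat_lt [MetricSpace Y] {q : Y → X} {n : ℕ}
    (hq : dsecat q < n) :
    ∃ A : Fin n → Set X, (⋃ i, A i) = univ ∧
      ∀ i, ∃ s : A i → SymProd Y n.factorial, Continuous s ∧
        ∀ a : A i, ∃ y : Fin n.factorial → Y, (∀ j, q (y j) = a) ∧ s a = SymProd.mk y := by
  obtain ⟨S, hS, hS_spec⟩ := exists_finset_lowerHemicontinuous_of_dsecat_lt hq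
  refine ⟨fun i => {x | (S x).card = i + 1}, eq_univ_of_forall fun x => ?_, fun i => ?_⟩
  · obtain ⟨hS_nonempty, hS_card, -⟩ := hS_spec x
    have card_pos : 0 < (S x).card := hS_nonempty.card_pos
    exact mem_iUnion.2 ⟨⟨(S x).card - 1, by omega⟩, (Nat.sub_add_cancel card_pos).symm⟩
  · obtain ⟨c, hc⟩ : (i + 1 : ℕ) ∣ n.factorial := Nat.dvd_factorial i.succ_pos i.is_lt
    rw [hc]
    refine ⟨fun a => SymProd.replicate c (SymProd.ofFinset a.2),
      (SymProd.continuous_replicate c).comp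
        (SymProd.continuous_ofFinset (hS.comp continuous_subtype_val) fun a => a.2),
      fun a => ?_⟩
    obtain ⟨y, -, hyS, hy⟩ := SymProd.exists_mk_eq_ofFinset a.2
    exact ⟨_, fun j => (hS_spec a).2.2 _ (hyS _),
      (congrArg _ hy.symm).trans (SymProd.replicate_mk c y)⟩

end FinitelySupportedMeasures

section ParametrizedContraction

/-- The homotopy `E^I_B × [0,1] → E^r_B` which at time `t` evaluates a path after reparametrizing
it by `s ↦ (1 - t) s`; it contracts `Π_r^E` onto the starting points of the paths. -/
noncomputable def contractEval {E : Type u} {B : Type v} [TopologicalSpace E]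
    [TopologicalSpace B] (p : E → B) (r : ℕ) (w : FibredPaths p × I) : FibredProd p r :=
  ⟨fun i => w.1.1 (σ w.2 * tDiv r i), fun i j => by
    obtain ⟨b, hb⟩ := w.1.2
    rw [hb, hb]⟩

section Topological

variable {E : Type u} {B : Type v} [TopologicalSpace E] [TopologicalSpace B] {p : E → B} {r : ℕ}

theorem continuous_contractEval : Continuous (contractEval p r) := by
  refine Continuous.subtype_mk (continuous_pi fun i => ?_) _
  have continuous_path : Continuous fun w : FibredPaths p × I => w.1.1 :=
    continuous_subtype_val.comp continuous_fst
  have continuous_time : Continuous fun w : FibredPaths p × I => σ w.2 * tDiv r i := by fun_prop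
  exact continuous_path.eval continuous_time

theorem contractEval_zero (γ : FibredPaths p) : contractEval p r (γ, 0) = parmEval p r γ :=
  Subtype.ext <| funext fun i => by simp [contractEval, parmEval]

theorem parmEval_apply_zero (hr : 0 < r) (γ : FibredPaths p) :
    (parmEval p r γ).1 ⟨0, hr⟩ = γ.1 0 := by
  simp [parmEval, tDiv]

end Topological

theorem contractEval_one {E B : Type} [TopologicalSpace E] [TopologicalSpace B] {p : E → B} {r : ℕ}
    (γ : FibredPaths p) : contractEval p r (γ, 1) = fibDiag p r (γ.1 0) :=
  Subtype.ext <| funext fun i => by simp [contractEval, fibDiag]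

end ParametrizedContraction

theorem exists_cover_deforming_to_diagonal_general {E B : Type} [MetricSpace E]
    [TopologicalSpace B] (p : E → B) (r : ℕ) (hr : 2 ≤ r) (n : ℕ)
    (hlt : dTCfib p r < (n : ℕ∞)) :
    ∃ A : Fin n → Set (FibredProd p r), (⋃ i, A i) = Set.univ ∧
      ∀ i, ∃ H : (A i) × I → SymProd (FibredProd p r) (Nat.factorial n),
        Continuous H ∧
        (∀ a : A i, H (a, 0) = spDiag (Nat.factorial n) (a : FibredProd p r)) ∧
        ∀ a : A i, ∃ e : E, H (a, 1) = spDiag (Nat.factorial n) (fibDiag p r e) := by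
  obtain ⟨A, hA, hs⟩ := exists_cover_multisection_of_dsecat_lt hlt
  refine ⟨A, hA, fun i => ?_⟩
  obtain ⟨s, hs, hs_fiber⟩ := hs i
  refine ⟨fun w => SymProd.map (fun γ => contractEval p r (γ, w.2)) (s w.1),
    (SymProd.continuous_map_prod continuous_contractEval).comp (hs.prodMap continuous_id),
    fun a => ?_, fun a => ?_⟩
  · obtain ⟨γ, hγ, hsγ⟩ := hs_fiber a
    refine (congrArg _ hsγ).trans (SymProd.map_mk_eq_spDiag fun j => ?_)
    rw [contractEval_zero, hγ]
  · obtain ⟨γ, hγ, hsγ⟩ := hs_fiber a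
    have hr_pos : 0 < r := by omega
    refine ⟨a.1.1 ⟨0, hr_pos⟩, (congrArg _ hsγ).trans (SymProd.map_mk_eq_spDiag fun j => ?_)⟩
    rw [contractEval_one, ← parmEval_apply_zero hr_pos, hγ]

/-- If `dTC_r[p : E → B] < n` then `E^r_B` is covered by sets
`A₁, …, Aₙ`, each of which deforms inside `SP^{n!}(E^r_B)` to the diagonal
`Δ_r(E) ⊆ E^r_B ⊆ SP^{n!}(E^r_B)`: there are homotopies `H_i : A_i × [0,1] → SP^{n!}(E^r_B)`
with `H_i(a,0) = δ_{n!}(a)` and `H_i(a,1) ∈ δ_{n!}(Δ_r(E))`. -/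
theorem exists_cover_deforming_to_diagonal {E B : Type} [MetricSpace E] [TopologicalSpace B]
    (p : E → B) (hp : IsHurewiczFibration p) (r : ℕ) (hr : 2 ≤ r) (n : ℕ) (hn : 1 ≤ n)
    (hlt : dTCfib p r < (n : ℕ∞)) :
    ∃ A : Fin n → Set (FibredProd p r), (⋃ i, A i) = Set.univ ∧
      ∀ i, ∃ H : (A i) × I → SymProd (FibredProd p r) (Nat.factorial n),
        Continuous H ∧
        (∀ a : A i, H (a, 0) = spDiag (Nat.factorial n) (a : FibredProd p r)) ∧
        ∀ a : A i, ∃ e : E, H (a, 1) = spDiag (Nat.factorial n) (fibDiag p r e) :=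
  exists_cover_deforming_to_diagonal_general p r hr n hlt
end
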